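/- For any (n+1)×n matrix P with entries in a commutative ring, any row indices 1 ≤ k₁ < k₂ < k₃ ≤ n+1 and any column index 1 ≤ l ≤ n, one has det(P^{k₁}) · det(P^{k₂,k₃}_{l}) − det(P^{k₂}) · det(P^{k₁,k₃}_{l}) + det(P^{k₃}) · det(P^{k₁,k₂}_{l}) = 0. -/

import Mathlib

namespace ASMDPP

/-- The determinant of the square submatrix of `M` whose rows and columns are those
listed (in order) in `rows` and `cols` (always lists of the same length here). -/
def detOn {R : Type*} [CommRing R] (M : ℕ → ℕ → R) (rows cols : List ℕ) : R :=
  Matrix.det (Matrix.of fun i j : Fin rows.length => M (rows.getD i 0) (cols.getD j 0))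

section Helpers

open Matrix

/-- The alternating form obtained by replacing two columns. -/
def twoCol {R : Type*} [CommRing R] {m : ℕ} (A : Matrix (Fin m) (Fin m) R) (a b : Fin m)
    (x y : Fin m → R) : R := ((A.updateCol a x).updateCol b y).det

lemma twoCol_comm {R : Type*} [CommRing R] {m : ℕ} (A : Matrix (Fin m) (Fin m) R)
    {a b : Fin m} (hab : a ≠ b) (x y : Fin m → R) :
    twoCol A a b y x = - twoCol A a b x y := by
  unfold twoCol
  have h := Matrix.det_permute' (Equiv.swap a b) ((A.updateCol a x).updateCol b y)
  rw [Equiv.Perm.sign_swap hab] at h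
  simp only [Units.val_neg, Units.val_one, Int.cast_neg, Int.cast_one, neg_mul, one_mul] at h
  rw [← h]
  congr 1
  ext i j
  by_cases h1 : j = a
  · subst h1; simp [Matrix.updateCol_apply, hab]
  · by_cases h2 : j = b
    · subst h2; simp [Matrix.updateCol_apply, hab]
    · simp [Matrix.updateCol_apply, h1, h2, Equiv.swap_apply_of_ne_of_ne h1 h2]

lemma twoCol_sum {R : Type*} [CommRing R] {m : ℕ} (A : Matrix (Fin m) (Fin m) R)
    (a b : Fin m) (x y : Fin m → R) :
    twoCol A a b x y = (A.updateCol a x).cramer y b := by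
  rw [Matrix.cramer_apply]; rfl

lemma twoCol_col {R : Type*} [CommRing R] {m : ℕ} (A : Matrix (Fin m) (Fin m) R)
    {a b c : Fin m} (hca : c ≠ a) (hcb : c ≠ b) (x : Fin m → R) :
    twoCol A a b x (fun i => A i c) = 0 := by
  unfold twoCol
  apply Matrix.det_zero_of_column_eq hcb
  intro i
  simp [Matrix.updateCol_apply, hca, hcb]

lemma twoCol_plucker {R : Type*} [CommRing R] {m : ℕ} (A : Matrix (Fin m) (Fin m) R)
    {a b : Fin m} (hab : a ≠ b) (p x y z : Fin m → R) :
    twoCol A a b p x * twoCol A a b y z - twoCol A a b p y * twoCol A a b x z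
      + twoCol A a b p z * twoCol A a b x y = 0 := by
  have key := Matrix.mulVec_cramer ((A.updateCol a y).updateCol b z) p
  set M := (A.updateCol a y).updateCol b z with hM
  have h1 : M.cramer p a = twoCol A a b p z := by
    rw [Matrix.cramer_apply, twoCol, hM]
    congr 1
    ext i j
    by_cases h1 : j = a
    · subst h1; simp [Matrix.updateCol_apply, hab]
    · simp [Matrix.updateCol_apply, h1]
  have h2 : M.cramer p b = twoCol A a b y p := by
    rw [Matrix.cramer_apply, twoCol, hM]
    congr 1
    ext i j
    by_cases h1 : j = b
    · subst h1; simp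
    · simp [Matrix.updateCol_apply, h1]
  have h3 : M *ᵥ M.cramer p = ∑ c, M.cramer p c • (fun i => M i c) := by
    ext i
    simp [Matrix.mulVec, dotProduct, Finset.sum_apply, mul_comm]
  rw [h3] at key
  have key2 := congrArg (fun v => (A.updateCol a x).cramer v b) key
  simp only [map_sum, map_smul, Finset.sum_apply, Pi.smul_apply, smul_eq_mul] at key2
  simp only [← twoCol_sum] at key2
  have hsub : ∑ c, M.cramer p c * twoCol A a b x (fun i => M i c) =
      ∑ c ∈ ({a, b} : Finset (Fin m)), M.cramer p c * twoCol A a b x (fun i => M i c) := by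
    symm
    apply Finset.sum_subset (Finset.subset_univ _)
    intro c _ hc
    simp only [Finset.mem_insert, Finset.mem_singleton, not_or] at hc
    have : (fun i => M i c) = fun i => A i c := by
      ext i; simp [hM, Matrix.updateCol_apply, hc.1, hc.2]
    rw [this, twoCol_col A hc.1 hc.2, mul_zero]
  have ha : (fun i => M i a) = y := by ext i; simp [hM, Matrix.updateCol_apply, hab]
  have hb : (fun i => M i b) = z := by ext i; simp [hM]
  rw [hsub, Finset.sum_pair hab, ha, hb, h1, h2] at key2
  have hd : M.det = twoCol A a b y z := rfl
  rw [hd, twoCol_comm A hab p y, twoCol_comm A hab p x] at key2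
  linear_combination key2

lemma det_updateCol_single {R : Type*} [CommRing R] {m : ℕ}
    (A : Matrix (Fin (m+1)) (Fin (m+1)) R) (j i : Fin (m+1)) :
    (A.updateCol j (Pi.single i 1)).det =
      (-1) ^ (i + j : ℕ) * (A.submatrix i.succAbove j.succAbove).det := by
  rw [Matrix.det_succ_column _ j, Finset.sum_eq_single i]
  · simp
  · intro b _ hb; simp [hb]
  · simp

lemma matrix_identity {R : Type*} [CommRing R] {N : ℕ}
    (Q : Matrix (Fin (N+2)) (Fin (N+1)) R) (l : Fin (N+1)) (k₁ k₂ : Fin (N+1)) (h : k₁ < k₂)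
    (k₃ : Fin (N+2)) (h' : k₂.castSucc < k₃) :
    (Q.submatrix k₁.castSucc.succAbove id).det *
      (Q.submatrix (k₃.succAbove ∘ k₂.succAbove) l.succAbove).det
    - (Q.submatrix k₂.castSucc.succAbove id).det *
      (Q.submatrix (k₃.succAbove ∘ k₁.succAbove) l.succAbove).det
    + (Q.submatrix k₃.succAbove id).det *
      (Q.submatrix (k₂.castSucc.succAbove ∘ k₁.succAbove) l.succAbove).det = 0 := by
  let A : Matrix (Fin (N+2)) (Fin (N+2)) R := Matrix.of fun r => Fin.cons 0 (Q r)
  have hA : ∀ r c, A r (Fin.succ c) = Q r c := fun r c => rfl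
  have e1 : ∀ k : Fin (N+2), twoCol A l.succ 0 (fun r => Q r l) (Pi.single k 1) =
      (-1) ^ (k : ℕ) * (Q.submatrix k.succAbove id).det := by
    intro k
    rw [twoCol, det_updateCol_single]
    congr 2
    ext r c
    by_cases hc : c = l
    · subst hc; simp [Matrix.updateCol_apply]
    · simp [Matrix.updateCol_apply, hc, hA]
  have e2 : ∀ (i : Fin (N+1)) (k : Fin (N+2)), i.castSucc < k →
      twoCol A l.succ 0 (Pi.single i.castSucc 1) (Pi.single k 1) =
      (-1) ^ (k : ℕ) * ((-1) ^ (i + l : ℕ) *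
        (Q.submatrix (k.succAbove ∘ i.succAbove) l.succAbove).det) := by
    intro i k hik
    rw [twoCol, det_updateCol_single]
    have : ((A.updateCol l.succ (Pi.single i.castSucc 1)).submatrix k.succAbove
        (Fin.succAbove 0)) = (Q.submatrix k.succAbove id).updateCol l (Pi.single i 1) := by
      ext r c
      by_cases hc : c = l
      · subst hc
        have hk : k.succAbove i = i.castSucc := Fin.succAbove_of_castSucc_lt _ _ hik
        have : k.succAbove r = i.castSucc ↔ r = i := by
          rw [← hk]; exact Fin.succAbove_right_injective.eq_iff
        simp [Matrix.updateCol_apply, Pi.single_apply, this]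
      · simp [Matrix.updateCol_apply, hc, hA]
    rw [this, det_updateCol_single]
    simp [Matrix.submatrix_submatrix]
  have key := twoCol_plucker A (a := l.succ) (b := 0) (Fin.succ_ne_zero l) (fun r => Q r l)
    (Pi.single k₁.castSucc 1) (Pi.single k₂.castSucc 1) (Pi.single k₃ 1)
  rw [e1, e1, e1, e2 _ _ h', e2 _ _ (lt_trans (by simpa using h) h'),
    e2 _ _ (by simpa using h)] at key
  have hs : ((-1 : R) ^ ((k₁ : ℕ) + k₂ + k₃ + l)) * (-1) ^ ((k₁ : ℕ) + k₂ + k₃ + l) = 1 := by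
    rw [← mul_pow]; simp
  simp only [Fin.val_castSucc, pow_add] at key hs
  generalize (Q.submatrix k₁.castSucc.succAbove id).det = d1 at *
  generalize (Q.submatrix k₂.castSucc.succAbove id).det = d2 at *
  generalize (Q.submatrix k₃.succAbove id).det = d3 at *
  generalize (Q.submatrix (k₃.succAbove ∘ k₂.succAbove) l.succAbove).det = f1 at *
  generalize (Q.submatrix (k₃.succAbove ∘ k₁.succAbove) l.succAbove).det = f2 at *
  generalize (Q.submatrix (k₂.castSucc.succAbove ∘ k₁.succAbove) l.succAbove).det = f3 at *
  generalize (-1 : R) ^ (k₁ : ℕ) = s1 at *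
  generalize (-1 : R) ^ (k₂ : ℕ) = s2 at *
  generalize (-1 : R) ^ (k₃ : ℕ) = s3 at *
  generalize (-1 : R) ^ (l : ℕ) = s4 at *
  linear_combination (s1 * s2 * s3 * s4) * key - (d1 * f1 - d2 * f2 + d3 * f3) * hs

lemma list_eq_ofFn {m : ℕ} (f : Fin m → ℕ) (hf : StrictMono f) (L : List ℕ)
    (hL : L.Pairwise (· < ·)) (h : ∀ x, x ∈ L ↔ ∃ i, f i = x) : L = List.ofFn f := by
  have hO : (List.ofFn f).Pairwise (· < ·) := by
    rw [List.pairwise_ofFn]; exact fun i j hij => hf hij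
  refine List.Perm.eq_of_pairwise (le := (· < ·)) ?_ hL hO ?_
  · intro a b _ _ h1 h2; omega
  · rw [List.perm_ext_iff_of_nodup (hL.imp ne_of_lt) (hO.imp ne_of_lt)]
    intro x; rw [h]; simp [List.mem_ofFn]

lemma detOn_ofFn {R : Type*} [CommRing R] (P : ℕ → ℕ → R) {m : ℕ} (rows cols : List ℕ)
    (f g : Fin m → ℕ) (hr : rows = List.ofFn f) (hc : cols = List.ofFn g) :
    detOn P rows cols = (Matrix.of fun i j : Fin m => P (f i) (g j)).det := by
  have hlen : rows.length = m := by simp [hr]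
  have hf : ∀ i : Fin m, rows.getD i 0 = f i := by intro i; simp [hr]
  have hg : ∀ i : Fin m, cols.getD i 0 = g i := by intro i; simp [hc]
  clear hr hc
  subst hlen
  unfold detOn
  simp only [hf, hg]

lemma exists_succAbove {m : ℕ} (k : Fin (m+1)) (x : Fin (m+1)) :
    (∃ i, k.succAbove i = x) ↔ x ≠ k := Fin.exists_succAbove_eq_iff

lemma range_one (m k : ℕ) (hk : k < m + 1) :
    (List.range' 1 (m+1)).filter (· ≠ k + 1) =
      List.ofFn (fun i : Fin m => ((Fin.succAbove ⟨k, hk⟩ i : Fin (m+1)) : ℕ) + 1) := by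
  apply list_eq_ofFn
  · intro i j hij
    have := (Fin.strictMono_succAbove (⟨k, hk⟩ : Fin (m+1))) hij
    simpa using this
  · exact List.Pairwise.filter _ List.pairwise_lt_range'
  · intro x
    simp only [List.mem_filter, List.mem_range'_1, decide_eq_true_eq]
    constructor
    · rintro ⟨hx, hne⟩
      obtain ⟨i, hi⟩ := (exists_succAbove ⟨k, hk⟩ ⟨x - 1, by omega⟩).2
        (by simp [Fin.ext_iff]; omega)
      exact ⟨i, by rw [hi]; simp; omega⟩
    · rintro ⟨i, rfl⟩
      have := (Fin.succAbove_ne (⟨k, hk⟩ : Fin (m+1)) i)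
      have h2 := (Fin.succAbove ⟨k, hk⟩ i : Fin (m+1)).isLt
      simp only [ne_eq, Fin.ext_iff] at this
      omega

lemma range_two (m i k : ℕ) (hik : i < k) (hk : k < m + 2) :
    (List.range' 1 (m+2)).filter (fun r => r ≠ i + 1 ∧ r ≠ k + 1) =
      List.ofFn (fun r : Fin m => ((Fin.succAbove ⟨k, hk⟩
        (Fin.succAbove (⟨i, by omega⟩ : Fin (m+1)) r) : Fin (m+2)) : ℕ) + 1) := by
  have hi' : i < m + 1 := by omega
  have hki : Fin.succAbove ⟨k, hk⟩ (⟨i, hi'⟩ : Fin (m+1)) = (⟨i, by omega⟩ : Fin (m+2)) :=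
    Fin.succAbove_of_castSucc_lt _ _ (by simpa [Fin.lt_def] using hik)
  apply list_eq_ofFn
  · intro a b hab
    have := (Fin.strictMono_succAbove (⟨k, hk⟩ : Fin (m+2)))
      ((Fin.strictMono_succAbove (⟨i, hi'⟩ : Fin (m+1))) hab)
    simpa using this
  · exact List.Pairwise.filter _ List.pairwise_lt_range'
  · intro x
    simp only [List.mem_filter, List.mem_range'_1, decide_eq_true_eq]
    constructor
    · rintro ⟨hx, hne1, hne2⟩
      obtain ⟨j, hj⟩ := (exists_succAbove ⟨k, hk⟩ ⟨x - 1, by omega⟩).2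
        (by simp [Fin.ext_iff]; omega)
      have hji : j ≠ ⟨i, hi'⟩ := by
        rintro rfl
        rw [hki] at hj
        simp [Fin.ext_iff] at hj
        omega
      obtain ⟨r, hr⟩ := (exists_succAbove _ _).2 hji
      exact ⟨r, by rw [hr, hj]; simp; omega⟩
    · rintro ⟨r, rfl⟩
      have h0 := Fin.succAbove_ne (⟨i, hi'⟩ : Fin (m+1)) r
      generalize Fin.succAbove (⟨i, hi'⟩ : Fin (m+1)) r = j at *
      have h1 := Fin.succAbove_ne (⟨k, hk⟩ : Fin (m+2)) j
      have h3 : Fin.succAbove ⟨k, hk⟩ j ≠ (⟨i, by omega⟩ : Fin (m+2)) := by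
        rw [← hki]; exact fun h => h0 (Fin.succAbove_right_injective h)
      have h2 := (Fin.succAbove ⟨k, hk⟩ j : Fin (m+2)).isLt
      simp only [ne_eq, Fin.ext_iff] at h1 h3
      omega

lemma range_zero (m : ℕ) : List.range' 1 m = List.ofFn (fun i : Fin m => (i : ℕ) + 1) := by
  apply list_eq_ofFn
  · intro i j hij; simpa using hij
  · exact List.pairwise_lt_range'
  · intro x
    simp only [List.mem_range'_1]
    constructor
    · intro hx; exact ⟨⟨x - 1, by omega⟩, by simp; omega⟩
    · rintro ⟨i, rfl⟩; omega

end Helpers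

/-- A further form of the Desnanot–Jacobi identity, for an `(n+1) × n` matrix `P` with
rows indexed by `1, …, n+1` and columns indexed by `1, …, n`: `P^{i}` deletes row `i`,
and `P^{i,j}_{l}` deletes rows `i`, `j` and column `l`. -/
theorem desnanot_jacobi_mixed {R : Type*} [CommRing R] (n : ℕ)
    (P : ℕ → ℕ → R) (k₁ k₂ k₃ l : ℕ) (h₁ : 1 ≤ k₁) (h₁₂ : k₁ < k₂) (h₂₃ : k₂ < k₃)
    (h₃ : k₃ ≤ n + 1) (hl₁ : 1 ≤ l) (hl : l ≤ n) :
    detOn P ((List.range' 1 (n + 1)).filter (· ≠ k₁)) (List.range' 1 n) *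
      detOn P ((List.range' 1 (n + 1)).filter (fun r => r ≠ k₂ ∧ r ≠ k₃))
        ((List.range' 1 n).filter (· ≠ l)) -
    detOn P ((List.range' 1 (n + 1)).filter (· ≠ k₂)) (List.range' 1 n) *
      detOn P ((List.range' 1 (n + 1)).filter (fun r => r ≠ k₁ ∧ r ≠ k₃))
        ((List.range' 1 n).filter (· ≠ l)) +
    detOn P ((List.range' 1 (n + 1)).filter (· ≠ k₃)) (List.range' 1 n) *
      detOn P ((List.range' 1 (n + 1)).filter (fun r => r ≠ k₁ ∧ r ≠ k₂))
        ((List.range' 1 n).filter (· ≠ l)) = 0 := by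
  obtain ⟨N, rfl⟩ : ∃ N, n = N + 1 := ⟨n - 1, by omega⟩
  obtain ⟨a, rfl⟩ : ∃ a, k₁ = a + 1 := ⟨k₁ - 1, by omega⟩
  obtain ⟨b, rfl⟩ : ∃ b, k₂ = b + 1 := ⟨k₂ - 1, by omega⟩
  obtain ⟨c, rfl⟩ : ∃ c, k₃ = c + 1 := ⟨k₃ - 1, by omega⟩
  obtain ⟨d, rfl⟩ : ∃ d, l = d + 1 := ⟨l - 1, by omega⟩
  have key := matrix_identity
    (Matrix.of fun (i : Fin (N+2)) (j : Fin (N+1)) => P ((i : ℕ) + 1) ((j : ℕ) + 1))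
    ⟨d, by omega⟩ ⟨a, by omega⟩ ⟨b, by omega⟩ (by simp [Fin.lt_def]; omega) ⟨c, by omega⟩
    (by simp [Fin.lt_def]; omega)
  rw [detOn_ofFn P _ _ _ _ (range_one (N+1) a (by omega)) (range_zero (N+1)),
    detOn_ofFn P _ _ _ _ (range_one (N+1) b (by omega)) (range_zero (N+1)),
    detOn_ofFn P _ _ _ _ (range_one (N+1) c (by omega)) (range_zero (N+1)),
    detOn_ofFn P _ _ _ _ (range_two N b c (by omega) (by omega)) (range_one N d (by omega)),
    detOn_ofFn P _ _ _ _ (range_two N a c (by omega) (by omega)) (range_one N d (by omega)),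
    detOn_ofFn P _ _ _ _ (range_two N a b (by omega) (by omega)) (range_one N d (by omega))]
  exact key

end ASMDPP
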